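/- Let G be a task graph with present bias β ∈ (0,1] and let c̃ be the MinMaxPathApprox cost configuration (for some choice of minmax path P and successor map ς). Then for every node v of G, the cost of a cheapest directed path from v to t under c̃ is at most twice its cost under the original costs: d_c̃(v) ≤ 2·d_0̃(v). -/

import Mathlib

/-!
The witness for the bound is the `ς`-walk itself, whose original cost from `v` is `d(v)`.
Extra cost is only charged on a `ς`-edge leaving a node of `P` off `P`, and there it equals the
largest edge cost on the segment up to the next node of `P`, hence at most the total cost of that
segment. Since the charged segments are edge-disjoint, the total extra cost is at most `d(v)`.

The disjointness is handled by an invariant (`exists_walk_cost_add_seg_le`) proved by induction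
along the acyclic edge relation: from every `x` some walk to `t` has modified cost at most `2 d(x)` *minus*
the cost of the `ς`-segment from `x` to the next node of `P`. Off `P` the invariant passes from
`ς x` to `x`, as the segment grows by the edge just traversed; on `P` the segment of `x` is
trivial, and the slack available at `ς x` pays for the extra cost of the edge `(x, ς x)`.
The invariant holds for every amount of fuel in `sigmaWalk`, so truncation plays no role.
-/

/-!
Framework: task graphs, present-biased agents, perceived costs, greedy walks,
motivating rewards, cost configurations and subgraphs
(Kleinberg–Oren model, following Albers–Kraft).
-/

variable {V : Type} [Fintype V] [DecidableEq V]

/-- The list of (directed) edges traversed by a walk given as a list of vertices. -/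
def walkEdges (p : List V) : List (V × V) := p.zip p.tail

/-- `p` is a walk in the edge set `E`: consecutive vertices are joined by edges. -/
def IsWalk (E : Finset (V × V)) (p : List V) : Prop :=
  List.Chain' (fun u v : V => (u, v) ∈ E) p

/-- `p` is a walk in `E` from `a` to `b`. -/
def IsWalkFrom (E : Finset (V × V)) (p : List V) (a b : V) : Prop :=
  IsWalk E p ∧ p.head? = some a ∧ p.getLast? = some b

/-- There is a walk in `E` from `a` to `b`. -/
def Reaches (E : Finset (V × V)) (a b : V) : Prop :=
  ∃ p : List V, IsWalkFrom E p a b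

/-- Total cost of a walk. -/
noncomputable def walkCost (c : V × V → ℝ) (p : List V) : ℝ :=
  ((walkEdges p).map c).sum

/-- A task graph: a finite DAG with source `s`, target `t`, nonnegative edge
costs, in which every node lies on some directed path from `s` to `t`. -/
structure TaskGraph (V : Type) [Fintype V] [DecidableEq V] where
  E : Finset (V × V)
  s : V
  t : V
  c : V × V → ℝ
  c_nonneg : ∀ e ∈ E, 0 ≤ c e
  acyclic : ∀ p : List V, IsWalk E p → p.Nodup
  onPath : ∀ v : V, ∃ p : List V, IsWalkFrom E p s t ∧ v ∈ p

/-- `dcost E c t v` : cost of a cheapest walk from `v` to `t` in `E` w.r.t. costs `c`. -/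
noncomputable def dcost (E : Finset (V × V)) (c : V × V → ℝ) (t v : V) : ℝ :=
  sInf (walkCost c '' {p : List V | IsWalkFrom E p v t})

/-- Perceived cost `η(v,w) = c(v,w) + β d(w)` of an edge for a `β`-present-biased agent. -/
noncomputable def etaCost (E : Finset (V × V)) (c : V × V → ℝ) (t : V) (β : ℝ)
    (e : V × V) : ℝ :=
  c e + β * dcost E c t e.2

/-- Lowest perceived cost `ζ(v)`: the infimum of `η(v,w)` over edges `(v,w) ∈ E`
whose head `w` admits a continuation to `t` (i.e. over the agent's possible plans). -/
noncomputable def zetaCost (E : Finset (V × V)) (c : V × V → ℝ) (t : V) (β : ℝ)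
    (v : V) : ℝ :=
  sInf {x : ℝ | ∃ w : V, (v, w) ∈ E ∧ Reaches E w t ∧ etaCost E c t β (v, w) = x}

/-- One step of the agent's greedy walk for reward `r`: she traverses only
edges realizing the lowest perceived cost, and only if `ζ(v) ≤ β r`. -/
def GreedyStep (E : Finset (V × V)) (c : V × V → ℝ) (t : V) (β r : ℝ) (v w : V) : Prop :=
  v ≠ t ∧ (v, w) ∈ E ∧ Reaches E w t ∧
    etaCost E c t β (v, w) = zetaCost E c t β v ∧ zetaCost E c t β v ≤ β * r

/-- Nodes the agent may visit on some greedy walk from `s`. -/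
inductive AgentReach (E : Finset (V × V)) (c : V × V → ℝ) (s t : V) (β r : ℝ) : V → Prop
  | start : AgentReach E c s t β r s
  | step {v w : V} : AgentReach E c s t β r v → GreedyStep E c t β r v w →
      AgentReach E c s t β r w

/-- The task graph (with edge set `E`, costs `c`) is motivating for reward `r`:
at every node the agent may reach, she neither abandons nor gets stuck,
i.e. she can always perform a greedy step (hence, the graph being a finite DAG,
she reaches `t` on every greedy walk). -/
def Motivating (E : Finset (V × V)) (c : V × V → ℝ) (s t : V) (β r : ℝ) : Prop :=
  ∀ v : V, AgentReach E c s t β r v → v ≠ t → ∃ w : V, GreedyStep E c t β r v w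

/-- A complete greedy walk of the agent from `s` to `t`. -/
def AgentWalk (E : Finset (V × V)) (c : V × V → ℝ) (s t : V) (β r : ℝ) (p : List V) : Prop :=
  IsWalkFrom E p s t ∧ List.Chain' (GreedyStep E c t β r) p

/-- An initial segment of a greedy walk of the agent starting at `s`. -/
def GreedyPrefix (E : Finset (V × V)) (c : V × V → ℝ) (s t : V) (β r : ℝ) (p : List V) : Prop :=
  p.head? = some s ∧ List.Chain' (GreedyStep E c t β r) p

/-- A cost configuration: nonnegative extra costs on the edges. -/
def CostConfig (c' : V × V → ℝ) : Prop := ∀ e : V × V, 0 ≤ c' e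

/-- The modified costs obtained by applying a cost configuration to `G`. -/
noncomputable def addc (G : TaskGraph V) (c' : V × V → ℝ) : V × V → ℝ :=
  fun e => G.c e + c' e

/-- The cost configuration `c'` is motivating for reward `r` on `G`. -/
def MotivatingConfig (G : TaskGraph V) (β r : ℝ) (c' : V × V → ℝ) : Prop :=
  Motivating G.E (addc G c') G.s G.t β r

/-- The subgraph of `G` with edge set `E'` (retaining an `s`–`t` path) is
motivating for reward `r`; all quantities are computed within the subgraph. -/
def MotivatingSubgraph (G : TaskGraph V) (β r : ℝ) (E' : Finset (V × V)) : Prop :=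
  E' ⊆ G.E ∧ (∃ p : List V, IsWalkFrom E' p G.s G.t) ∧ Motivating E' G.c G.s G.t β r

/-- Maximum of `f` over the edges of a walk (`0` if the walk has no edges; all
relevant values are nonnegative). -/
noncomputable def maxEdge (f : V × V → ℝ) (p : List V) : ℝ :=
  ((walkEdges p).map f).foldr max 0

/-- `ϱ`: the minimum over all `s`–`t` paths `P` of the maximum perceived edge cost
`η_0̃(e)` over the edges `e` of `P`. -/
noncomputable def minmaxRho (G : TaskGraph V) (β : ℝ) : ℝ :=
  sInf ((fun p => maxEdge (etaCost G.E G.c G.t β) p) ''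
    {p : List V | IsWalkFrom G.E p G.s G.t})

/-- The `ς`-walk starting at `v`: `v, ς v, ς (ς v), …` until `t` is reached
(with fuel `n`, which is taken to be the number of nodes). -/
def sigmaWalk (ς : V → V) (t : V) : ℕ → V → List V
  | 0, v => [v]
  | n + 1, v => if v = t then [v] else v :: sigmaWalk ς t n (ς v)

/-- The initial segment of `q` up to (and including) its first node lying on `P`. -/
def segUpToMem (P : List V) (q : List V) : List V :=
  q.takeWhile (fun u => decide (u ∉ P)) ++ (q.dropWhile (fun u => decide (u ∉ P))).take 1

/-- `P` is a minmax path: an `s`–`t` path whose maximum perceived edge cost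
attains `ϱ`. -/
def IsMinmaxPath (G : TaskGraph V) (β : ℝ) (P : List V) : Prop :=
  IsWalkFrom G.E P G.s G.t ∧ maxEdge (etaCost G.E G.c G.t β) P = minmaxRho G β

/-- `ς` is a cheapest-path successor map: for each `v ≠ t`, `(v, ς v)` is the
first edge of some cheapest path from `v` to `t` under the original costs. -/
def IsCheapestSucc (G : TaskGraph V) (ς : V → V) : Prop :=
  ∀ v : V, v ≠ G.t → (v, ς v) ∈ G.E ∧
    G.c (v, ς v) + dcost G.E G.c G.t (ς v) = dcost G.E G.c G.t v

/-- `c'` is the MinMaxPathApprox cost configuration for the minmax path `P` and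
the cheapest-path successor map `ς`: edges of `P`, and `ς`-edges leaving nodes
not on `P`, are free; edges neither on `P` nor `ς`-edges cost `3ϱ/β` extra; and a
`ς`-edge leaving a node `v` of `P` (not along `P`) costs the value of a most
expensive edge of the `ς`-path of `v` between `v` and its next intersection with `P`. -/
def IsMMPA (G : TaskGraph V) (β : ℝ) (P : List V) (ς : V → V) (c' : V × V → ℝ) : Prop :=
  IsMinmaxPath G β P ∧ IsCheapestSucc G ς ∧
  (∀ e ∈ walkEdges P, c' e = 0) ∧
  (∀ v w : V, (v, w) ∉ walkEdges P → w = ς v → v ∉ P → c' (v, w) = 0) ∧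
  (∀ v w : V, (v, w) ∉ walkEdges P → w ≠ ς v → c' (v, w) = 3 * minmaxRho G β / β) ∧
  (∀ v w : V, (v, w) ∉ walkEdges P → w = ς v → v ∈ P →
      c' (v, w) = maxEdge G.c
        (v :: segUpToMem P (sigmaWalk ς G.t (Fintype.card V) v).tail))

lemma walkEdges_cons_cons (x y : V) (l : List V) :
    walkEdges (x :: y :: l) = (x, y) :: walkEdges (y :: l) := rfl

lemma walkCost_cons_cons (c : V × V → ℝ) (x y : V) (l : List V) :
    walkCost c (x :: y :: l) = c (x, y) + walkCost c (y :: l) := by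
  simp [walkCost, walkEdges_cons_cons]

lemma walkCost_singleton (c : V × V → ℝ) (x : V) : walkCost c [x] = 0 := by
  simp [walkCost, walkEdges]

lemma mem_of_mem_walkEdges {E : Finset (V × V)} :
    ∀ {p : List V}, IsWalk E p → ∀ e ∈ walkEdges p, e ∈ E
  | [], _, e, he => by simp [walkEdges] at he
  | [x], _, e, he => by simp [walkEdges] at he
  | x :: y :: l, hp, e, he => by
    have hp' : (x, y) ∈ E ∧ IsWalk E (y :: l) := List.isChain_cons_cons.1 hp
    rw [walkEdges_cons_cons, List.mem_cons] at he
    rcases he with rfl | he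
    · exact hp'.1
    · exact mem_of_mem_walkEdges hp'.2 e he

lemma foldr_max_zero_nonneg : ∀ l : List ℝ, 0 ≤ l.foldr max 0
  | [] => le_rfl
  | _ :: l => le_max_of_le_right (foldr_max_zero_nonneg l)

lemma foldr_max_zero_le_sum : ∀ l : List ℝ, (∀ a ∈ l, 0 ≤ a) → l.foldr max 0 ≤ l.sum
  | [], _ => le_rfl
  | a :: l, h => by
    have ha := h a (by simp)
    have hl := foldr_max_zero_le_sum l fun b hb => h b (by simp [hb])
    have h0 := foldr_max_zero_nonneg l
    rw [List.foldr_cons, List.sum_cons]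
    exact max_le (by linarith) (by linarith)

lemma maxEdge_nonneg (f : V × V → ℝ) (p : List V) : 0 ≤ maxEdge f p :=
  foldr_max_zero_nonneg _

lemma walkCost_nonneg {E : Finset (V × V)} {c : V × V → ℝ} (hc : ∀ e ∈ E, 0 ≤ c e)
    {p : List V} (hp : IsWalk E p) : 0 ≤ walkCost c p := by
  refine List.sum_nonneg fun a ha => ?_
  obtain ⟨e, he, rfl⟩ := List.mem_map.1 ha
  exact hc e (mem_of_mem_walkEdges hp e he)

lemma maxEdge_le_walkCost {E : Finset (V × V)} {c : V × V → ℝ} (hc : ∀ e ∈ E, 0 ≤ c e)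
    {p : List V} (hp : IsWalk E p) : maxEdge c p ≤ walkCost c p := by
  refine foldr_max_zero_le_sum _ fun a ha => ?_
  obtain ⟨e, he, rfl⟩ := List.mem_map.1 ha
  exact hc e (mem_of_mem_walkEdges hp e he)

lemma dcost_nonneg {E : Finset (V × V)} {c : V × V → ℝ} (hc : ∀ e ∈ E, 0 ≤ c e) (t v : V) :
    0 ≤ dcost E c t v := by
  refine Real.sInf_nonneg ?_
  rintro _ ⟨p, hp, rfl⟩
  exact walkCost_nonneg hc hp.1

lemma dcost_le_walkCost {E : Finset (V × V)} {c : V × V → ℝ} (hc : ∀ e ∈ E, 0 ≤ c e) {t v : V}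
    {p : List V} (hp : IsWalkFrom E p v t) : dcost E c t v ≤ walkCost c p := by
  refine csInf_le ⟨0, ?_⟩ ⟨p, hp, rfl⟩
  rintro _ ⟨q, hq, rfl⟩
  exact walkCost_nonneg hc hq.1

lemma minmaxRho_nonneg (G : TaskGraph V) (β : ℝ) : 0 ≤ minmaxRho G β := by
  refine Real.sInf_nonneg ?_
  rintro _ ⟨p, _, rfl⟩
  exact maxEdge_nonneg _ _

lemma IsMMPA.costConfig {G : TaskGraph V} {β : ℝ} (hβ : 0 < β) {P : List V} {ς : V → V}
    {c' : V × V → ℝ} (h : IsMMPA G β P ς c') : CostConfig c' := by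
  obtain ⟨-, -, h1, h2, h3, h4⟩ := h
  rintro ⟨v, w⟩
  by_cases he : (v, w) ∈ walkEdges P
  · exact (h1 _ he).ge
  by_cases hw : w = ς v
  · by_cases hv : v ∈ P
    · rw [h4 v w he hw hv]
      exact maxEdge_nonneg _ _
    · exact (h2 v w he hw hv).ge
  · rw [h3 v w he hw]
    have := minmaxRho_nonneg G β
    positivity

lemma sigmaWalk_eq_cons (ς : V → V) (t : V) (n : ℕ) (x : V) :
    ∃ l, sigmaWalk ς t n x = x :: l := by
  cases n with
  | zero => exact ⟨[], rfl⟩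
  | succ n =>
    rw [sigmaWalk]
    split_ifs
    exacts [⟨_, rfl⟩, ⟨_, rfl⟩]

lemma isWalk_sigmaWalk {G : TaskGraph V} {ς : V → V} (hς : IsCheapestSucc G ς) (n : ℕ) (x : V) :
    IsWalk G.E (sigmaWalk ς G.t n x) := by
  induction n generalizing x with
  | zero => exact List.isChain_singleton x
  | succ n ih =>
    rw [sigmaWalk]
    split_ifs with hx
    · exact List.isChain_singleton x
    · obtain ⟨l, hl⟩ := sigmaWalk_eq_cons ς G.t n (ς x)
      have := ih (ς x)
      rw [hl] at this ⊢
      exact List.isChain_cons_cons.2 ⟨(hς x hx).1, this⟩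

lemma segUpToMem_cons_of_mem {P : List V} {x : V} (hx : x ∈ P) (l : List V) :
    segUpToMem P (x :: l) = [x] := by
  simp [segUpToMem, hx]

lemma segUpToMem_cons_of_notMem {P : List V} {x : V} (hx : x ∉ P) (l : List V) :
    segUpToMem P (x :: l) = x :: segUpToMem P l := by
  simp [segUpToMem, hx]

lemma segUpToMem_cons_eq_cons (P : List V) (x : V) (l : List V) :
    ∃ l', segUpToMem P (x :: l) = x :: l' := by
  by_cases hx : x ∈ P
  · exact ⟨_, segUpToMem_cons_of_mem hx l⟩
  · exact ⟨_, segUpToMem_cons_of_notMem hx l⟩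

lemma segUpToMem_prefix (P q : List V) : segUpToMem P q <+: q := by
  conv_rhs => rw [← List.takeWhile_append_dropWhile (p := fun u => decide (u ∉ P)) (l := q)]
  exact (List.prefix_append_right_inj _).2 (List.take_prefix _ _)

/-- The invariant: some walk from `x` to `t` is cheaper, under the modified costs, than `2 d(x)` by
at least the original cost of the `ς`-segment from `x` to the next node of `P`, whatever the
fuel `n`. The induction is on a bound `N` for the number of nodes of a walk starting at `x`. -/
lemma exists_walk_cost_add_seg_le {G : TaskGraph V} {β : ℝ} {P : List V} {ς : V → V}
    {c' : V × V → ℝ} (h : IsMMPA G β P ς c') (N : ℕ) (x : V)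
    (hN : ∀ p, IsWalk G.E (x :: p) → (x :: p).length ≤ N) :
    ∃ p, IsWalkFrom G.E p x G.t ∧ ∀ n,
      walkCost (addc G c') p + walkCost G.c (segUpToMem P (sigmaWalk ς G.t n x)) ≤
        2 * dcost G.E G.c G.t x := by
  obtain ⟨⟨hP, -⟩, hς, h1, h2, -, h4⟩ := h
  have htP : G.t ∈ P := List.mem_of_getLast? hP.2.2
  induction N generalizing x with
  | zero => simpa using hN [] (List.isChain_singleton x)
  | succ N ih =>
    by_cases hxt : x = G.t
    · subst hxt
      refine ⟨[G.t], ⟨List.isChain_singleton _, rfl, rfl⟩, fun n => ?_⟩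
      obtain ⟨l, hl⟩ := sigmaWalk_eq_cons ς G.t n G.t
      rw [hl, segUpToMem_cons_of_mem htP, walkCost_singleton, walkCost_singleton]
      have := dcost_nonneg G.c_nonneg G.t G.t
      linarith
    obtain ⟨hE, hd⟩ := hς x hxt
    obtain ⟨p, hp, hcost⟩ := ih (ς x) fun q hq => by
      simpa using hN (ς x :: q) (List.isChain_cons_cons.2 ⟨hE, hq⟩)
    obtain ⟨q, rfl⟩ : ∃ q, p = ς x :: q := by
      cases p with
      | nil => simpa using hp.2.1
      | cons a q => exact ⟨q, by rw [show a = ς x by simpa using hp.2.1]⟩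
    refine ⟨x :: ς x :: q, ⟨List.isChain_cons_cons.2 ⟨hE, hp.1⟩, rfl, ?_⟩, fun n => ?_⟩
    · rw [List.getLast?_cons_cons]
      exact hp.2.2
    have hc0 := G.c_nonneg _ hE
    have hseg (m : ℕ) : 0 ≤ walkCost G.c (segUpToMem P (sigmaWalk ς G.t m (ς x))) :=
      walkCost_nonneg G.c_nonneg ((isWalk_sigmaWalk hς m _).prefix (segUpToMem_prefix P _))
    rw [walkCost_cons_cons]
    simp only [addc] at hcost ⊢
    by_cases hxP : x ∈ P
    · obtain ⟨l, hl⟩ := sigmaWalk_eq_cons ς G.t n x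
      rw [hl, segUpToMem_cons_of_mem hxP, walkCost_singleton]
      by_cases he : (x, ς x) ∈ walkEdges P
      · rw [h1 _ he]
        linarith [hcost 0, hseg 0]
      -- The slack in the invariant at `ς x` covers the extra cost of the edge `(x, ς x)`.
      obtain ⟨k, hk⟩ : ∃ k, Fintype.card V = k + 1 :=
        Nat.exists_eq_succ_of_ne_zero (Fintype.card_pos_iff.2 ⟨x⟩).ne'
      rw [h4 x _ he rfl hxP, hk, sigmaWalk, if_neg hxt, List.tail_cons]
      have hw := (isWalk_sigmaWalk hς k (ς x)).prefix (segUpToMem_prefix P _)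
      have hk' := hcost k
      obtain ⟨l₁, hl₁⟩ := sigmaWalk_eq_cons ς G.t k (ς x)
      obtain ⟨l₂, hl₂⟩ := segUpToMem_cons_eq_cons P (ς x) l₁
      rw [hl₁, hl₂] at hw hk' ⊢
      have hM := maxEdge_le_walkCost G.c_nonneg (p := x :: ς x :: l₂)
        (List.isChain_cons_cons.2 ⟨hE, hw⟩)
      rw [walkCost_cons_cons] at hM
      linarith
    · have he : c' (x, ς x) = 0 := by
        by_cases he : (x, ς x) ∈ walkEdges P
        · exact h1 _ he
        · exact h2 x _ he rfl hxP
      rw [he]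
      cases n with
      | zero =>
        rw [sigmaWalk, segUpToMem_cons_of_notMem hxP]
        have : walkCost G.c (x :: segUpToMem P []) = 0 := walkCost_singleton _ _
        linarith [hcost 0, hseg 0]
      | succ n =>
        rw [sigmaWalk, if_neg hxt, segUpToMem_cons_of_notMem hxP]
        have hn := hcost n
        obtain ⟨l₁, hl₁⟩ := sigmaWalk_eq_cons ς G.t n (ς x)
        obtain ⟨l₂, hl₂⟩ := segUpToMem_cons_eq_cons P (ς x) l₁
        rw [hl₁, hl₂] at hn ⊢
        rw [walkCost_cons_cons]
        linarith

/-- Under the MinMaxPathApprox cost configuration, the cost of a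
cheapest path from any node `v` to `t` is at most twice its cost under the
original costs: `d_{c'}(v) ≤ 2 d_0̃(v)`. -/
theorem stmt_11 (G : TaskGraph V) (β : ℝ) (hβ0 : 0 < β) (hβ1 : β ≤ 1)
    (P : List V) (ς : V → V) (c' : V × V → ℝ) (h : IsMMPA G β P ς c') :
    ∀ v : V, dcost G.E (addc G c') G.t v ≤ 2 * dcost G.E G.c G.t v := by
  intro v
  obtain ⟨p, hp, hcost⟩ := exists_walk_cost_add_seg_le h (Fintype.card V) v
    fun p hp => (G.acyclic _ hp).length_le_card
  have hc : ∀ e ∈ G.E, 0 ≤ addc G c' e := fun e he =>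
    add_nonneg (G.c_nonneg e he) (h.costConfig hβ0 e)
  have hle := dcost_le_walkCost hc hp
  have hseg : 0 ≤ walkCost G.c (segUpToMem P (sigmaWalk ς G.t 0 v)) :=
    walkCost_nonneg G.c_nonneg ((isWalk_sigmaWalk h.2.1 0 v).prefix (segUpToMem_prefix P _))
  linarith [hcost 0]
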